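/- Let ψ: h̄⊗A → ℂ be a linear map and V(ψ) the associated irreducible highest weight 𝔏(A)-module. Then V(ψ) has finite-dimensional weight spaces with respect to h̄ if and only if there exists a cofinite ideal I of A with ψ(h̄⊗I) = 0. Moreover, in this case (𝔏⊗I)·V(ψ) = 0. -/

import Mathlib

noncomputable section

/-!
Common setup: a realization of the loop affine-Virasoro algebra
`𝔏(A) = ((g̊ ⊗ ℂ[t,t⁻¹] ⊕ ℂK) ⋊ Vir) ⊗ A`.

* `g` plays the role of the finite dimensional simple Lie algebra `g̊`.
* `A` is a commutative associative unital `ℂ`-algebra.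
* `L` plays the role of `𝔏(A)`; the structure fields record the generators
  `E n x a = (x ⊗ tⁿ) ⊗ a`, `D n a = dₙ ⊗ a`, `K a = K ⊗ a`, `C a = C ⊗ a`
  together with the defining bracket relations, and the fact that the
  generators span `L`.
-/

/-- An ideal of a `ℂ`-algebra is cofinite if the quotient is finite dimensional. -/
def IsCofiniteIdeal {A : Type*} [CommRing A] [Algebra ℂ A] (I : Ideal A) : Prop :=
  FiniteDimensional ℂ (A ⧸ I)

/-- A realization of the loop affine-Virasoro algebra `𝔏(A)`. -/
structure LoopAffVir (g : Type*) [LieRing g] [LieAlgebra ℂ g]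
    (A : Type*) [CommRing A] [Algebra ℂ A]
    (L : Type*) [LieRing L] [LieAlgebra ℂ L] : Type _ where
  /-- the Cartan subalgebra `h̊` of `g̊` -/
  H : LieSubalgebra ℂ g
  isCartan : H.IsCartanSubalgebra
  /-- the invariant nondegenerate symmetric bilinear form on `g̊` -/
  form : g →ₗ[ℂ] g →ₗ[ℂ] ℂ
  form_symm : ∀ x y : g, form x y = form y x
  form_nondeg : ∀ x : g, (∀ y : g, form x y = 0) → x = 0
  form_invariant : ∀ x y z : g, form ⁅x, y⁆ z = form x ⁅y, z⁆
  /-- the root space `g̊_α` -/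
  rootSp : Module.Dual ℂ H → Submodule ℂ g
  rootSp_def : ∀ (α : Module.Dual ℂ H) (x : g),
      x ∈ rootSp α ↔ ∀ h : H, ⁅(h : g), x⁆ = α h • x
  /-- a choice of positive roots `Δ̊₊` -/
  Δplus : Set (Module.Dual ℂ H)
  Δplus_root : ∀ α ∈ Δplus, α ≠ 0 ∧ rootSp α ≠ ⊥
  Δplus_cover : ∀ α : Module.Dual ℂ H, α ≠ 0 → rootSp α ≠ ⊥ → α ∈ Δplus ∨ -α ∈ Δplus
  Δplus_disj : ∀ α ∈ Δplus, -α ∉ Δplus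
  /-- `E n x a = (x ⊗ tⁿ) ⊗ a` -/
  E : ℤ → g →ₗ[ℂ] A →ₗ[ℂ] L
  /-- `D n a = dₙ ⊗ a` -/
  D : ℤ → A →ₗ[ℂ] L
  /-- `K a = K ⊗ a` (affine center) -/
  K : A →ₗ[ℂ] L
  /-- `C a = C ⊗ a` (Virasoro center) -/
  C : A →ₗ[ℂ] L
  lie_EE : ∀ (n m : ℤ) (x y : g) (a b : A),
      ⁅E n x a, E m y b⁆ = E (n + m) ⁅x, y⁆ (a * b)
        + (if m = -n then (n : ℂ) * form x y else 0) • K (a * b)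
  lie_DE : ∀ (n m : ℤ) (x : g) (a b : A),
      ⁅D n a, E m x b⁆ = (m : ℂ) • E (m + n) x (a * b)
  lie_DD : ∀ (n m : ℤ) (a b : A),
      ⁅D n a, D m b⁆ = ((m : ℂ) - (n : ℂ)) • D (n + m) (a * b)
        + (if m = -n then (((n : ℂ) ^ 3 - (n : ℂ)) / 12) else 0) • C (a * b)
  K_central : ∀ (a : A) (z : L), ⁅K a, z⁆ = 0
  C_central : ∀ (a : A) (z : L), ⁅C a, z⁆ = 0
  span_top : Submodule.span ℂ
      ({z : L | ∃ (n : ℤ) (x : g) (a : A), z = E n x a}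
        ∪ {z : L | ∃ (n : ℤ) (a : A), z = D n a}
        ∪ {z : L | ∃ a : A, z = K a}
        ∪ {z : L | ∃ a : A, z = C a}) = ⊤

namespace LoopAffVir

variable {g A L : Type*} [LieRing g] [LieAlgebra ℂ g] [CommRing A] [Algebra ℂ A]
  [LieRing L] [LieAlgebra ℂ L] (S : LoopAffVir g A L)

/-- Generators of the Cartan subalgebra `h̄ = h̊ ⊕ ℂK ⊕ ℂd₀ ⊕ ℂC ⊆ 𝔏 ⊗ 1`. -/
def cartanSet : Set L :=
  {z : L | ∃ h ∈ S.H, z = S.E 0 h 1} ∪ {S.K 1, S.D 0 1, S.C 1}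

/-- The Cartan subalgebra `h̄` of `𝔏(A)`. -/
def cartan : Submodule ℂ L := Submodule.span ℂ S.cartanSet

/-- `h ∈ h̊` as an element of `h̄`. -/
def eH (h : S.H) : S.cartan :=
  ⟨S.E 0 h 1, Submodule.subset_span (Set.mem_union_left _ ⟨(h : g), h.2, rfl⟩)⟩

/-- `K ⊗ 1` as an element of `h̄`. -/
def K1 : S.cartan :=
  ⟨S.K 1, Submodule.subset_span (Set.mem_union_right _ (by simp))⟩

/-- `d₀ ⊗ 1` as an element of `h̄`. -/
def d0 : S.cartan :=
  ⟨S.D 0 1, Submodule.subset_span (Set.mem_union_right _ (by simp))⟩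

/-- `C ⊗ 1` as an element of `h̄`. -/
def C1 : S.cartan :=
  ⟨S.C 1, Submodule.subset_span (Set.mem_union_right _ (by simp))⟩

variable (V : Type*) [AddCommGroup V] [Module ℂ V] [LieRingModule L V] [LieModule ℂ L V]

/-- The weight space of an `𝔏(A)`-module attached to `χ ∈ h̄*`. -/
def wtSpace (χ : Module.Dual ℂ S.cartan) : Submodule ℂ V where
  carrier := {v : V | ∀ h : S.cartan, ⁅(h : L), v⁆ = χ h • v}
  add_mem' := by
    intro a b ha hb h
    rw [lie_add, ha h, hb h, smul_add]
  zero_mem' := by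
    intro h
    rw [lie_zero, smul_zero]
  smul_mem' := by
    intro c v hv h
    rw [lie_smul, hv h, smul_comm]

/-- The set of weights `P(V)`. -/
def weights : Set (Module.Dual ℂ S.cartan) := {χ | S.wtSpace V χ ≠ ⊥}

/-- `V` is a weight module: it is the (direct) sum of its weight spaces. -/
def IsWeightModule : Prop := (⨆ χ : Module.Dual ℂ S.cartan, S.wtSpace V χ) = ⊤

/-- All weight spaces are finite dimensional. -/
def HasFinDimWeightSpaces : Prop :=
  ∀ χ : Module.Dual ℂ S.cartan, FiniteDimensional ℂ (S.wtSpace V χ)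

/-- Integrability: `V` is a weight module with finite dimensional weight spaces on which all
real root vectors `(x ⊗ tⁿ) ⊗ a`, `x ∈ g̊_α`, `α ∈ Δ̊`, act locally nilpotently. -/
def IsIntegrable : Prop :=
  S.IsWeightModule V ∧ S.HasFinDimWeightSpaces V ∧
    ∀ α : Module.Dual ℂ S.H, α ≠ 0 → S.rootSp α ≠ ⊥ →
      ∀ x ∈ S.rootSp α, ∀ (n : ℤ) (a : A) (v : V),
        ∃ N : ℕ, ((LieModule.toEnd ℂ L V) (S.E n x a) ^ N) v = 0

/-- The highest weight space
`M = {v ∈ V : (x ⊗ tⁿ ⊗ a) v = 0 ∀ x ∈ g̊_α, α ∈ Δ̊₊, n ∈ ℤ, a ∈ A}` for the second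
triangular decomposition. -/
def hwSpace : Submodule ℂ V where
  carrier := {v : V | ∀ α ∈ S.Δplus, ∀ x ∈ S.rootSp α, ∀ (n : ℤ) (a : A), ⁅S.E n x a, v⁆ = 0}
  add_mem' := by
    intro u w hu hw α hα x hx n a
    rw [lie_add, hu α hα x hx n a, hw α hα x hx n a, add_zero]
  zero_mem' := by
    intro α hα x hx n a
    rw [lie_zero]
  smul_mem' := by
    intro t v hv α hα x hx n a
    rw [lie_smul, hv α hα x hx n a, smul_zero]

/-- Generators of `𝔏(A)⁺ = (n₊ ⊕ Vir⁺) ⊗ A` for the natural triangular decomposition. -/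
def plusSet : Set L :=
  {z : L | ∃ n : ℤ, 0 < n ∧ ∃ (x : g) (a : A), z = S.E n x a} ∪
  {z : L | ∃ α ∈ S.Δplus, ∃ x ∈ S.rootSp α, ∃ a : A, z = S.E 0 x a} ∪
  {z : L | ∃ n : ℤ, 0 < n ∧ ∃ a : A, z = S.D n a}

/-- Generators of `𝔏(A)⁻ = (n₋ ⊕ Vir⁻) ⊗ A` for the natural triangular decomposition. -/
def minusSet : Set L :=
  {z : L | ∃ n : ℤ, n < 0 ∧ ∃ (x : g) (a : A), z = S.E n x a} ∪
  {z : L | ∃ α ∈ S.Δplus, ∃ x ∈ S.rootSp (-α), ∃ a : A, z = S.E 0 x a} ∪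
  {z : L | ∃ n : ℤ, n < 0 ∧ ∃ a : A, z = S.D n a}

/-- Generators of `𝔏(A)⁰ = h̄ ⊗ A`. -/
def cartanASet : Set L :=
  {z : L | ∃ h ∈ S.H, ∃ a : A, z = S.E 0 h a} ∪ {z : L | ∃ a : A, z = S.K a}
    ∪ {z : L | ∃ a : A, z = S.D 0 a} ∪ {z : L | ∃ a : A, z = S.C a}

/-- `𝔏(A)⁰ = h̄ ⊗ A` as a subspace of `L`. -/
def cartanA : Submodule ℂ L := Submodule.span ℂ S.cartanASet

/-- `h ⊗ a`, `h ∈ h̊`, as an element of `h̄ ⊗ A`. -/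
def eHA (h : S.H) (a : A) : S.cartanA :=
  ⟨S.E 0 h a, Submodule.subset_span
    (Set.mem_union_left _ (Set.mem_union_left _ (Set.mem_union_left _ ⟨(h : g), h.2, a, rfl⟩)))⟩

/-- `K ⊗ a` as an element of `h̄ ⊗ A`. -/
def KA (a : A) : S.cartanA :=
  ⟨S.K a, Submodule.subset_span
    (Set.mem_union_left _ (Set.mem_union_left _ (Set.mem_union_right _ ⟨a, rfl⟩)))⟩

/-- `d₀ ⊗ a` as an element of `h̄ ⊗ A`. -/
def DA0 (a : A) : S.cartanA :=
  ⟨S.D 0 a, Submodule.subset_span (Set.mem_union_left _ (Set.mem_union_right _ ⟨a, rfl⟩))⟩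

/-- `C ⊗ a` as an element of `h̄ ⊗ A`. -/
def CA (a : A) : S.cartanA :=
  ⟨S.C a, Submodule.subset_span (Set.mem_union_right _ ⟨a, rfl⟩)⟩

/-- `V` is a highest weight module with highest weight `ψ : h̄ ⊗ A → ℂ` for the natural
triangular decomposition: some nonzero vector `v` is annihilated by `𝔏(A)⁺`, is a
`ψ`-eigenvector for `h̄ ⊗ A`, and generates `V`. -/
def IsHWModule (ψ : Module.Dual ℂ S.cartanA) : Prop :=
  ∃ v : V, v ≠ 0 ∧ (∀ z ∈ S.plusSet, ⁅z, v⁆ = 0) ∧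
    (∀ h : S.cartanA, ⁅(h : L), v⁆ = ψ h • v) ∧
    ∀ W : LieSubmodule ℂ L V, v ∈ W → W = ⊤

/-- `(𝔏 ⊗ I) ⬝ V = 0`. -/
def Annihilates (I : Ideal A) : Prop :=
  ∀ a ∈ I, (∀ (n : ℤ) (x : g) (v : V), ⁅S.E n x a, v⁆ = 0) ∧
    (∀ (n : ℤ) (v : V), ⁅S.D n a, v⁆ = 0) ∧
    (∀ v : V, ⁅S.K a, v⁆ = 0) ∧ (∀ v : V, ⁅S.C a, v⁆ = 0)

/-- `(𝔏₀ ⊗ R)` kills the subspace `X`, where `𝔏₀ = (h̊ ⊗ ℂ[t,t⁻¹] ⊕ ℂK) ⋊ Vir`. -/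
def ZeroPartAnnOn (R : Ideal A) (X : Submodule ℂ V) : Prop :=
  ∀ a ∈ R, ∀ v ∈ X,
    (∀ (n : ℤ) (h : g), h ∈ S.H → ⁅S.E n h a, v⁆ = 0) ∧
    (∀ n : ℤ, ⁅S.D n a, v⁆ = 0) ∧ ⁅S.K a, v⁆ = 0 ∧ ⁅S.C a, v⁆ = 0

/-- Generators of `𝔏(A)₀ = ((h̊ ⊗ ℂ[t,t⁻¹] ⊕ ℂK) ⋊ Vir) ⊗ A`. -/
def zeroPartSet : Set L :=
  {z : L | ∃ (n : ℤ) (h : g), h ∈ S.H ∧ ∃ a : A, z = S.E n h a}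
    ∪ {z : L | ∃ a : A, z = S.K a}
    ∪ {z : L | ∃ (n : ℤ) (a : A), z = S.D n a}
    ∪ {z : L | ∃ a : A, z = S.C a}

/-- Generators of `g(A) = (g̊ ⊗ ℂ[t,t⁻¹] ⊕ ℂK ⊕ ℂd₀) ⊗ A`. -/
def gASet : Set L :=
  {z : L | ∃ (n : ℤ) (x : g) (a : A), z = S.E n x a}
    ∪ {z : L | ∃ a : A, z = S.K a} ∪ {z : L | ∃ a : A, z = S.D 0 a}

/-- Generators of `(h̊ ⊗ ℂ[t,t⁻¹] ⊕ ℂK) ⊗ A`. -/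
def heisSet : Set L :=
  {z : L | ∃ (n : ℤ) (h : g), h ∈ S.H ∧ ∃ a : A, z = S.E n h a}
    ∪ {z : L | ∃ a : A, z = S.K a}

/-- The smallest subspace of `V` containing `X` and stable under the operators in `Ops`;
this models `U(⋯) ⬝ X`. -/
def opClosure (Ops : Set L) (X : Submodule ℂ V) : Submodule ℂ V :=
  sInf {N : Submodule ℂ V | X ≤ N ∧ ∀ z ∈ Ops, ∀ v ∈ N, ⁅z, v⁆ ∈ N}

/-- The reflection `λ ↦ λ - λ(b) • β` on `h̄*`. -/
def reflMap (b : S.cartan) (β : Module.Dual ℂ S.cartan) :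
    Module.End ℂ (Module.Dual ℂ S.cartan) :=
  LinearMap.id - LinearMap.smulRight (Module.Dual.eval ℂ S.cartan b) β

/-- Given `ν⁻¹ : h̊* → h̊` (inverse of the form), the coroot
`β∨ = α∨ + (2 / ⟨α,α⟩) K ∈ h̄` of the real root `β = α + nδ`. -/
def corootOf (nu : Module.Dual ℂ S.H → S.H) (α : Module.Dual ℂ S.H) : S.cartan :=
  (2 / α (nu α)) • (S.eH (nu α) + S.K1)

/-- The (affine) Weyl group `W` of `𝔏(A)`, generated by the reflections in the real
roots `β = α + nδ`, acting on `h̄*`. -/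
def weylMonoid (nu : Module.Dual ℂ S.H → S.H)
    (ext : Module.Dual ℂ S.H →ₗ[ℂ] Module.Dual ℂ S.cartan)
    (δf : Module.Dual ℂ S.cartan) :
    Submonoid (Module.End ℂ (Module.Dual ℂ S.cartan)) :=
  Submonoid.closure {w | ∃ (α : Module.Dual ℂ S.H) (n : ℤ), α ≠ 0 ∧ S.rootSp α ≠ ⊥ ∧
    w = S.reflMap (S.corootOf nu α) (ext α + (n : ℂ) • δf)}

/-- The reflection `σ_α : h ↦ h - α(h) • α∨` on `h̊`. -/
def finReflMap (nu : Module.Dual ℂ S.H → S.H) (α : Module.Dual ℂ S.H) :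
    Module.End ℂ S.H :=
  LinearMap.id - LinearMap.smulRight (α : S.H →ₗ[ℂ] ℂ) ((2 / α (nu α)) • nu α)

/-- The finite Weyl group `W̊` of `g̊`, acting on `h̊`. -/
def finWeyl (nu : Module.Dual ℂ S.H → S.H) : Submonoid (Module.End ℂ S.H) :=
  Submonoid.closure {w | ∃ α : Module.Dual ℂ S.H, α ≠ 0 ∧ S.rootSp α ≠ ⊥ ∧
    w = S.finReflMap nu α}

/-- `ℤ[W̊(θ∨)] ⊆ h̊`: the additive group generated by the `W̊`-orbit of `θ∨`. -/
def thetaOrbitSpan (nu : Module.Dual ℂ S.H → S.H) (θ : Module.Dual ℂ S.H) :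
    AddSubgroup S.H :=
  AddSubgroup.closure {h | ∃ w ∈ S.finWeyl nu, h = w ((2 / θ (nu θ)) • nu θ)}

/-- The `d₀`-eigenspace of `V` for the eigenvalue `μ`. -/
def d0Eig (μ : ℂ) : Submodule ℂ V where
  carrier := {v : V | ⁅S.D 0 1, v⁆ = μ • v}
  add_mem' := by
    intro a b ha hb
    show ⁅S.D 0 1, a + b⁆ = μ • (a + b)
    rw [lie_add, ha, hb, smul_add]
  zero_mem' := by
    show ⁅S.D 0 1, (0 : V)⁆ = μ • (0 : V)
    rw [lie_zero, smul_zero]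
  smul_mem' := by
    intro c v hv
    show ⁅S.D 0 1, c • v⁆ = μ • c • v
    rw [lie_smul, hv, smul_comm]

end LoopAffVir

end

/-!
If the weight spaces of `V(ψ)` are finite dimensional and `x = d₋₁`, `d₋₂` or `h ⊗ t⁻¹` with
`h ∈ h̊`, then all vectors `(x ⊗ a) v` lie in one weight space, so the kernel of `a ↦ (x ⊗ a) v` has
finite codimension; acting by `d₀ ⊗ b` shows that it is an ideal. For `a` in the intersection of
finitely many such ideals, bracketing with `d₁`, `d₂` and `h' ⊗ t` shows that `h̄ ⊗ a` kills `v`.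

Conversely, let `ψ` vanish on `h̄ ⊗ I`. For a suitable `e ∈ h̄`, the algebra `𝔏(A)` is spanned by
eigenvectors of `ad e` of negative integral degree (the lowering operators), elements killing `v`
and `h̄ ⊗ A`, and then `(𝔏 ⊗ I) v` lies strictly below the degree of `v`. So does the submodule it
generates, which arises from it by lowering operators only. That submodule misses `v`, hence is zero
by irreducibility, and `𝔏 ⊗ I` kills `V(ψ)`. When `A / I` is finite dimensional, this leaves only
finitely many linearly independent lowering operators in each degree, so the eigenspaces of `e` on
`V(ψ)`, which contain the weight spaces, are finite dimensional.

The positive roots are only given as a set containing exactly one of `±α` for each root `α`, so they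
need not come from a linear functional. The element `e` is `(N + 1) d₀ + h`, where `-h` is the sum
of the coroots of those `α` for which `g̊_α` does not kill `v`. The `x ∈ g̊` such that `x ⊗ A` kills
`v` form a subalgebra, and this closedness makes `α(h)` negative for all those `α`.
-/

section RootPairing

open Finset

variable {ι R M N : Type*} [CommRing R] [CharZero R] [AddCommGroup M] [Module R M]
  [AddCommGroup N] [Module R N] (P : RootPairing ι R M N) [P.IsCrystallographic]

theorem pairingIn_reflectionPerm_right_eq_neg (i j : ι) :
    P.pairingIn ℤ j (P.reflectionPerm j i) = -P.pairingIn ℤ j i := by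
  rw [P.pairingIn_reflectionPerm ℤ, P.pairingIn_reflectionPerm_self_left]

theorem sum_pairingIn_pos_of_reflectionPerm_mem {s : Finset ι}
    (hneg : ∀ j ∈ s, P.reflectionPerm j j ∉ s)
    (hrefl : ∀ i ∈ s, ∀ j ∈ s, P.pairingIn ℤ j i < 0 → P.reflectionPerm j i ∈ s)
    {j : ι} (hj : j ∈ s) : 0 < ∑ i ∈ s, P.pairingIn ℤ j i := by
  classical
  -- The reflection in `j` moves the negative terms injectively to opposite ones, avoiding the
  -- term `⟨j, j⟩ = 2`.
  set n := s.filter (P.pairingIn ℤ j · < 0)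
  have hjn : j ∉ n.image (P.reflectionPerm j) := by
    intro h
    obtain ⟨i, hi, hij⟩ := mem_image.mp h
    rw [← P.reflectionPerm_self j i, hij] at hi
    exact hneg j hj (mem_filter.mp hi).1
  have hsub : insert j (n.image (P.reflectionPerm j)) ⊆ s.filter (¬ P.pairingIn ℤ j · < 0) := by
    intro k hk
    obtain rfl | hk := mem_insert.mp hk
    · simp [hj]
    · obtain ⟨i, hi, rfl⟩ := mem_image.mp hk
      obtain ⟨his, hi0⟩ := mem_filter.mp hi
      refine mem_filter.mpr ⟨hrefl i his j hj hi0, ?_⟩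
      rw [pairingIn_reflectionPerm_right_eq_neg]
      lia
  have hle := sum_le_sum_of_subset_of_nonneg (f := P.pairingIn ℤ j) hsub
    fun i hi _ => not_lt.mp (mem_filter.mp hi).2
  rw [sum_insert hjn, sum_image (P.reflectionPerm j).injective.injOn, P.pairingIn_same] at hle
  simp only [pairingIn_reflectionPerm_right_eq_neg, sum_neg_distrib] at hle
  rw [← sum_filter_add_sum_filter_not s (P.pairingIn ℤ j · < 0)]
  lia

end RootPairing

section CartanSubalgebra

open LieAlgebra LieModule

variable {K L : Type*} [Field K] [LieRing L] [LieAlgebra K L] [FiniteDimensional K L]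
  {H : LieSubalgebra K L} [H.IsCartanSubalgebra]

theorem iSup_rootSpace_eq_top [IsTriangularizable K H L] :
    ⨆ α : Weight K H L, (rootSpace H α).toSubmodule = ⊤ := by
  rw [← LieSubmodule.iSup_toSubmodule, iSup_genWeightSpace_eq_top', LieSubmodule.top_toSubmodule]

theorem mem_of_mem_rootSpace_of_isZero {α : Weight K H L} (hα : α.IsZero) {x : L}
    (hx : x ∈ rootSpace H α) : x ∈ H := by
  rw [hα.eq] at hx
  have : x ∈ rootSpace H (0 : H → K) := hx
  rwa [LieAlgebra.rootSpace_zero_eq] at this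

end CartanSubalgebra

section Killing

open LieAlgebra LieAlgebra.IsKilling LieModule

variable {K L : Type*} [Field K] [CharZero K] [LieRing L] [LieAlgebra K L]
  [IsKilling K L] [FiniteDimensional K L]
  {H : LieSubalgebra K L} [H.IsCartanSubalgebra] [IsTriangularizable K H L]

theorem exists_toEnd_pow_apply_ne_zero {α β : Weight K H L} (hα : α.IsNonZero) {k : ℕ}
    (hk : β (coroot α) = k) :
    ∃ f ∈ rootSpace H (-α), ∃ y ∈ rootSpace H β, (toEnd K L L f ^ k) y ≠ 0 := by
  obtain ⟨x, hx, x_ne0⟩ := (chainTop α β).exists_ne_zero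
  obtain ⟨h, e, f, isSl2, he, hf⟩ := exists_isSl2Triple_of_weight_isNonZero hα
  obtain rfl := isSl2.h_eq_coroot hα he hf
  have prim : isSl2.HasPrimitiveVectorWith x (chainLength α β : K) :=
    have := lie_mem_genWeightSpace_of_mem_genWeightSpace he hx
    ⟨x_ne0, (chainLength_smul _ _ hx).symm, by rwa [genWeightSpace_add_chainTop _ _ hα] at this⟩
  have hkt : (k : ℤ) = chainBotCoeff α β - chainTopCoeff α β := by
    rw [apply_coroot_eq_cast] at hk
    exact_mod_cast hk.symm
  have hlen := chainTopCoeff_add_chainBotCoeff α β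
  refine ⟨f, hf, (toEnd K L L f ^ chainTopCoeff α β) x, ?_, ?_⟩
  · convert toEnd_pow_apply_mem hf hx (chainTopCoeff α β) using 2
    rw [coe_chainTop', smul_neg, neg_add_cancel_left]
  · rw [← Module.End.mul_apply, ← pow_add]
    exact prim.pow_toEnd_f_ne_zero_of_eq_nat rfl (by lia)

theorem algebraMap_pairingIn_rootSystem (i j : H.root) :
    (((rootSystem H).pairingIn ℤ i j : ℤ) : K) = i.1 (coroot j.1) := by
  simpa using (rootSystem H).algebraMap_pairingIn ℤ i j

theorem rootSystem_reflectionPerm_apply (i j : H.root) (y : H) :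
    ((rootSystem H).reflectionPerm j i).1 y = i.1 y - i.1 (coroot j.1) * j.1 y := by
  have h := (rootSystem H).root_reflectionPerm j i
  rw [RootPairing.reflection_apply_root] at h
  exact LinearMap.congr_fun h y

theorem rootSpace_le_of_rootSpace_reflectionPerm_le (p : LieSubalgebra K L) {i j : H.root}
    (hij : (rootSystem H).pairingIn ℤ i j ≤ 0)
    (hj : (rootSpace H (-j.1)).toSubmodule ≤ p.toSubmodule)
    (hr : (rootSpace H ((rootSystem H).reflectionPerm j i).1).toSubmodule ≤ p.toSubmodule) :
    (rootSpace H i.1).toSubmodule ≤ p.toSubmodule := by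
  obtain ⟨k, hk⟩ := Int.exists_eq_neg_ofNat hij
  have hk' : i.1 (coroot j.1) = -(k : K) := by
    rw [← algebraMap_pairingIn_rootSystem, hk, Int.cast_neg, Int.cast_natCast]
  have hkr : ((rootSystem H).reflectionPerm j i).1 (coroot j.1) = k := by
    rw [rootSystem_reflectionPerm_apply, hk', root_apply_coroot (H.isNonZero_coe_root j)]
    ring
  obtain ⟨f, hf, y, hy, hfy⟩ := exists_toEnd_pow_apply_ne_zero (H.isNonZero_coe_root j) hkr
  have hmem : ∀ n, (toEnd K L L f ^ n) y ∈ p := by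
    intro n
    induction n with
    | zero => exact hr hy
    | succ n ih =>
      rw [pow_succ', Module.End.mul_apply]
      exact p.lie_mem (hj hf) ih
  have hi : (toEnd K L L f ^ k) y ∈ rootSpace H i.1 := by
    convert toEnd_pow_apply_mem hf hy k using 2
    ext z
    simp [rootSystem_reflectionPerm_apply, hk']
  intro z hz
  obtain ⟨c, hc⟩ := (finrank_eq_one_iff_of_nonzero' (⟨_, hi⟩ : rootSpace H i.1)
    (by simpa [Subtype.ext_iff] using hfy)).mp
      (finrank_rootSpace_eq_one _ (H.isNonZero_coe_root i)) ⟨z, hz⟩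
  obtain rfl : c • (toEnd K L L f ^ k) y = z := congrArg Subtype.val hc
  exact p.smul_mem c (hmem k)

theorem exists_neg_of_not_rootSpace_le (p : LieSubalgebra K L)
    (hp : ∀ i : H.root, (rootSpace H i.1).toSubmodule ≤ p.toSubmodule ∨
      (rootSpace H (-i.1)).toSubmodule ≤ p.toSubmodule) :
    ∃ h : H, ∀ i : H.root, ∃ d : ℤ, i.1 h = d ∧
      (¬ (rootSpace H i.1).toSubmodule ≤ p.toSubmodule → d < 0) := by
  classical
  let s : Finset H.root := {i | ¬ (rootSpace H i.1).toSubmodule ≤ p.toSubmodule}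
  have hs : ∀ i, i ∈ s ↔ ¬ (rootSpace H i.1).toSubmodule ≤ p.toSubmodule := by simp [s]
  have hopp : ∀ j ∈ s, (rootSpace H (-j.1)).toSubmodule ≤ p.toSubmodule := fun j hj =>
    (hp j).resolve_left ((hs j).mp hj)
  have hneg : ∀ j ∈ s, (rootSystem H).reflectionPerm j j ∉ s := by
    intro j hj
    rw [hs, not_not]
    convert hopp j hj
    ext y
    rw [rootSystem_reflectionPerm_apply, root_apply_coroot (H.isNonZero_coe_root j), Pi.neg_apply]
    ring
  have hrefl : ∀ i ∈ s, ∀ j ∈ s, (rootSystem H).pairingIn ℤ j i < 0 →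
      (rootSystem H).reflectionPerm j i ∈ s := by
    intro i hi j hj hij
    rw [hs] at hi ⊢
    rw [(rootSystem H).pairingIn_lt_zero_iff ℤ] at hij
    exact mt (rootSpace_le_of_rootSpace_reflectionPerm_le p hij.le (hopp j hj)) hi
  refine ⟨-∑ i ∈ s, coroot i.1, fun j => ⟨-∑ i ∈ s, (rootSystem H).pairingIn ℤ j i, ?_, ?_⟩⟩
  · rw [Int.cast_neg, Int.cast_sum]
    simp only [algebraMap_pairingIn_rootSystem]
    simp
  · rw [← hs, neg_lt_zero]
    exact sum_pairingIn_pos_of_reflectionPerm_mem _ hneg hrefl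

theorem exists_span_eigenvectors_eq_top (p : LieSubalgebra K L)
    (hp : ∀ i : H.root, (rootSpace H i.1).toSubmodule ≤ p.toSubmodule ∨
      (rootSpace H (-i.1)).toSubmodule ≤ p.toSubmodule) :
    ∃ h ∈ H, ∃ N : ℕ, Submodule.span K
      {x | ∃ d : ℤ, d ≤ N ∧ ⁅h, x⁆ = (d : K) • x ∧ (x ∈ H ∨ x ∈ p ∨ d < 0)} = ⊤ := by
  obtain ⟨h, hh⟩ := exists_neg_of_not_rootSpace_le p hp
  choose d hd hneg using hh
  refine ⟨h, h.2, ∑ i, (d i).natAbs, ?_⟩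
  rw [← top_le_iff, ← iSup_rootSpace_eq_top (H := H)]
  refine iSup_le fun α x hx => Submodule.subset_span ?_
  have hhx : ⁅(h : L), x⁆ = α h • x := lie_eq_smul_of_mem_rootSpace hx h
  by_cases hα : α.IsZero
  · refine ⟨0, Int.natCast_nonneg _, ?_, Or.inl (mem_of_mem_rootSpace_of_isZero hα hx)⟩
    rw [hhx, hα.eq, Pi.zero_apply, Int.cast_zero]
  · let i : H.root := ⟨α, by simpa using hα⟩
    refine ⟨d i, ?_, by rw [hhx, ← hd i], Or.inr ?_⟩
    · exact Int.le_natAbs.trans (mod_cast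
        Finset.single_le_sum (f := fun i => (d i).natAbs) (fun _ _ => Nat.zero_le _)
          (Finset.mem_univ i))
    · exact or_iff_not_imp_left.mpr fun hxp => hneg i fun hle => hxp (hle hx)

theorem apply_eq_zero_of_mem_rootSpace {Φ : L →ₗ[K] L →ₗ[K] K}
    (hΦ : ∀ x y z, Φ ⁅x, y⁆ z = Φ x ⁅y, z⁆) {α : Weight K H L} (hα : α.IsNonZero) {h x : L}
    (hh : h ∈ H) (hx : x ∈ rootSpace H α) : Φ h x = 0 := by
  obtain ⟨k, hk⟩ := Function.ne_iff.mp hα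
  have hhk : ⁅h, (k : L)⁆ = 0 := congrArg Subtype.val (trivial_lie_zero H H ⟨h, hh⟩ k)
  have hkx : ⁅(k : L), x⁆ = α k • x := lie_eq_smul_of_mem_rootSpace hx k
  have h0 := hΦ h k x
  rw [hhk, hkx, map_zero, LinearMap.zero_apply, map_smul, smul_eq_mul] at h0
  exact (mul_eq_zero.mp h0.symm).resolve_left hk

variable (H) in
theorem exists_apply_ne_zero_of_isCartanSubalgebra [Nontrivial L] {Φ : L →ₗ[K] L →ₗ[K] K}
    (hΦ : ∀ x y z, Φ ⁅x, y⁆ z = Φ x ⁅y, z⁆) (hsep : Φ.SeparatingLeft) :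
    ∃ h ∈ H, ∃ h' ∈ H, Φ h h' ≠ 0 := by
  obtain ⟨h, hh⟩ := exists_ne (0 : H)
  refine ⟨h, h.2, ?_⟩
  by_contra! hzero
  refine hh (Subtype.ext (hsep h fun x => ?_))
  have hker : ⨆ α : Weight K H L, (rootSpace H α).toSubmodule ≤ LinearMap.ker (Φ h) := by
    refine iSup_le fun α x hx => LinearMap.mem_ker.mpr ?_
    by_cases hα : α.IsZero
    · exact hzero x (mem_of_mem_rootSpace_of_isZero hα hx)
    · exact apply_eq_zero_of_mem_rootSpace hΦ hα h.2 hx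
  rw [iSup_rootSpace_eq_top] at hker
  exact hker Submodule.mem_top

end Killing

section GradedModule

open LieModule Module.End

section CommRing

variable {R L V : Type*} [CommRing R] [LieRing L] [LieAlgebra R L]
  [AddCommGroup V] [Module R V] [LieRingModule L V] [LieModule R L V]

theorem lieSpan_le_of_span_union_eq_top {M B : Set L} (hMB : Submodule.span R (M ∪ B) = ⊤)
    {X Y : Submodule R V} (hXY : X ≤ Y) (hB : ∀ z ∈ B, ∀ x ∈ X, ⁅z, x⁆ ∈ X)
    (hM : ∀ z ∈ M, ∀ y ∈ Y, ⁅z, y⁆ ∈ Y) :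
    (LieSubmodule.lieSpan R L (X : Set V)).toSubmodule ≤ Y := by
  -- The least `M`-stable subspace `Y₀` containing `X` is stable under all of `L`.
  let Y₀ : Submodule R V := sInf {N | X ≤ N ∧ ∀ z ∈ M, ∀ y ∈ N, ⁅z, y⁆ ∈ N}
  have hXY₀ : X ≤ Y₀ := le_sInf fun N hN => hN.1
  have hMY₀ : ∀ z ∈ M, ∀ y ∈ Y₀, ⁅z, y⁆ ∈ Y₀ := fun z hz y hy =>
    Submodule.mem_sInf.mpr fun N hN => hN.2 z hz y (Submodule.mem_sInf.mp hy N hN)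
  let W : Submodule R V := Y₀ ⊓ ⨅ z : L, Y₀.comap (toEnd R L V z)
  have hW : ∀ w, w ∈ W ↔ w ∈ Y₀ ∧ ∀ z : L, ⁅z, w⁆ ∈ Y₀ := by simp [W]
  have hXW : X ≤ W := by
    refine fun x hx => (hW x).mpr ⟨hXY₀ hx, fun z => ?_⟩
    have hspan : Submodule.span R (M ∪ B) ≤
        Y₀.comap ((toEnd R L V : L →ₗ[R] Module.End R V).flip x) :=
      Submodule.span_le.mpr fun z hz => hz.elim (fun hz => hMY₀ z hz x (hXY₀ hx))
        (fun hz => hXY₀ (hB z hz x hx))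
    rw [hMB] at hspan
    exact hspan (Submodule.mem_top (x := z))
  have hMW : ∀ z ∈ M, ∀ w ∈ W, ⁅z, w⁆ ∈ W := by
    simp only [hW]
    refine fun z hz w hw => ⟨hMY₀ z hz w hw.1, fun x => ?_⟩
    rw [leibniz_lie]
    exact add_mem (hw.2 _) (hMY₀ z hz _ (hw.2 x))
  have hYW : Y₀ ≤ W := sInf_le ⟨hXW, hMW⟩
  let N : LieSubmodule R L V := { Y₀ with lie_mem := fun {z y} hy => ((hW y).mp (hYW hy)).2 z }
  have hXN : LieSubmodule.lieSpan R L (X : Set V) ≤ N := LieSubmodule.lieSpan_le.mpr hXY₀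
  have hNY : Y₀ ≤ Y := sInf_le ⟨hXY, hM⟩
  exact fun w hw => hNY (hXN hw)

theorem lie_mem_eigenspace_toEnd {e y : L} {r μ : R} {w : V}
    (hy : y ∈ (toEnd R L L e).eigenspace r) (hw : w ∈ (toEnd R L V e).eigenspace μ) :
    ⁅y, w⁆ ∈ (toEnd R L V e).eigenspace (μ + r) := by
  rw [mem_eigenspace_iff, toEnd_apply_apply] at hy hw ⊢
  rw [leibniz_lie, hy, hw, smul_lie, lie_smul, ← add_smul, add_comm]

theorem exists_lie_eq_smul_of_mem_span {Z : Set L} {X : Set V}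
    (hZ : ∀ z ∈ Z, ∃ s : R, ∀ x ∈ X, ⁅z, x⁆ = s • x) {z : L} (hz : z ∈ Submodule.span R Z) :
    ∃ s : R, ∀ x ∈ X, ⁅z, x⁆ = s • x := by
  induction hz using Submodule.span_induction with
  | mem z hz => exact hZ z hz
  | zero => exact ⟨0, fun x _ => by rw [zero_lie, zero_smul]⟩
  | add y z _ _ hy hz =>
    obtain ⟨s, hs⟩ := hy
    obtain ⟨t, ht⟩ := hz
    exact ⟨s + t, fun x hx => by rw [add_lie, hs x hx, ht x hx, add_smul]⟩
  | smul t z _ hz =>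
    obtain ⟨s, hs⟩ := hz
    exact ⟨t * s, fun x hx => by rw [smul_lie, hs x hx, mul_smul]⟩

/-- The vectors killed by an ideal `J`, as a submodule for the whole Lie algebra. -/
def idealInvariants (V : Type*) [AddCommGroup V] [Module R V] [LieRingModule L V]
    [LieModule R L V] (J : LieIdeal R L) : LieSubmodule R L V where
  carrier := {w | ∀ z ∈ J, ⁅z, w⁆ = 0}
  add_mem' ha hb z hz := by rw [lie_add, ha z hz, hb z hz, add_zero]
  zero_mem' _ _ := lie_zero _
  smul_mem' t a ha z hz := by rw [lie_smul, ha z hz, smul_zero]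
  lie_mem {x w} hw z hz := by
    rw [leibniz_lie, hw z hz, hw _ (lie_mem_left R L J z x hz), lie_zero, add_zero]

end CommRing

variable {K L V : Type*} [Field K] [LieRing L] [LieAlgebra K L]
  [AddCommGroup V] [Module K V]

/-- The sum of the eigenspaces of `f` for `c - 1, c - 2, …`: the part of `V` of degree strictly
below `c` for the grading by eigenvalues of `f`. -/
def eigenspacesBelow (f : Module.End K V) (c : K) : Submodule K V :=
  ⨆ k : ℕ, f.eigenspace (c - (k + 1))

theorem notMem_eigenspacesBelow [CharZero K] {f : Module.End K V} {c : K} {v : V} (hv : v ≠ 0)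
    (hfv : v ∈ f.eigenspace c) : v ∉ eigenspacesBelow f c := by
  have hle : eigenspacesBelow f c ≤ ⨆ μ, ⨆ (_ : μ ≠ c), f.eigenspace μ := by
    refine iSup_le fun k => le_iSup₂_of_le (c - (k + 1)) ?_ le_rfl
    rw [ne_eq, sub_eq_self]
    exact Nat.cast_add_one_ne_zero k
  exact fun hvY => hv (Submodule.disjoint_def.mp (f.eigenspaces_iSupIndep c) v hfv (hle hvY))

/-- The subspace of `V` spanned by the vectors `f₁ ⋯ fₛ v` with `fᵢ ∈ T kᵢ` and
`∑ (kᵢ + 1) = n`. -/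
def gradedPiece (T : ℕ → Submodule K (Module.End K V)) (v : V) : ℕ → Submodule K V
  | 0 => Submodule.span K {v}
  | n + 1 => ⨆ j : Fin (n + 1), Submodule.map₂ LinearMap.id (T (n - j)) (gradedPiece T v j)

theorem fg_gradedPiece {T : ℕ → Submodule K (Module.End K V)} (hT : ∀ k, (T k).FG) (v : V)
    (n : ℕ) : (gradedPiece T v n).FG := by
  induction n using Nat.strong_induction_on with
  | h n ih =>
    cases n with
    | zero =>
      rw [gradedPiece]
      exact Submodule.fg_span_singleton v
    | succ n =>
      rw [gradedPiece]
      exact Submodule.fg_iSup _ fun j => (hT _).map₂ _ (ih j j.2)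

theorem apply_mem_gradedPiece {T : ℕ → Submodule K (Module.End K V)} {v w : V} {k n : ℕ}
    {f : Module.End K V} (hf : f ∈ T k) (hw : w ∈ gradedPiece T v n) :
    f w ∈ gradedPiece T v (n + k + 1) := by
  rw [gradedPiece]
  refine Submodule.mem_iSup_of_mem ⟨n, by lia⟩ (Submodule.apply_mem_map₂ LinearMap.id ?_ hw)
  rwa [Nat.add_sub_cancel_left]

theorem gradedPiece_le_eigenspace {f : Module.End K V} {T : ℕ → Submodule K (Module.End K V)}
    (hT : ∀ k, ∀ t ∈ T k, ∀ μ, ∀ w ∈ f.eigenspace μ, t w ∈ f.eigenspace (μ - (k + 1)))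
    {c : K} {v : V} (hv : v ∈ f.eigenspace c) (n : ℕ) :
    gradedPiece T v n ≤ f.eigenspace (c - n) := by
  induction n using Nat.strong_induction_on with
  | h n ih =>
    cases n with
    | zero => simpa [gradedPiece] using hv
    | succ n =>
      rw [gradedPiece]
      refine iSup_le fun j => Submodule.map₂_le.mpr fun t ht w hw => ?_
      have hj : c - (j : ℕ) - ((n - j : ℕ) + 1) = c - (n + 1 : ℕ) := by
        rw [Nat.cast_sub (by lia)]
        push_cast
        ring
      rw [← hj]
      exact hT _ t ht _ w (ih j j.2 hw)

theorem finiteDimensional_eigenspace_of_iSup_eq_top [CharZero K] {f : Module.End K V} {c : K}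
    {Z : ℕ → Submodule K V} (hfg : ∀ n, (Z n).FG) (hle : ∀ n, Z n ≤ f.eigenspace (c - n))
    (htop : ⨆ n, Z n = ⊤) (μ : K) : FiniteDimensional K (f.eigenspace μ) := by
  have hind := f.eigenspaces_iSupIndep
  by_cases hμ : ∃ n : ℕ, c - n = μ
  · obtain ⟨n, rfl⟩ := hμ
    have hinj : Function.Injective fun n : ℕ => c - (n : K) :=
      sub_right_injective.comp Nat.cast_injective
    have heq : Z n = f.eigenspace (c - n) :=
      congrFun ((hind.comp hinj).le_iff_eq_of_iSup_eq_top htop |>.mp hle) n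
    rw [← heq]
    exact Module.Finite.iff_fg.mpr (hfg n)
  · have hrest : ⨆ ν, ⨆ (_ : ν ≠ μ), f.eigenspace ν = ⊤ := by
      rw [← top_le_iff, ← htop]
      exact iSup_le fun n => le_iSup₂_of_le _ (fun h => hμ ⟨n, h⟩) (hle n)
    have hbot := hind μ
    rw [hrest, disjoint_top] at hbot
    rw [hbot]
    infer_instance

section HighestWeightVector

variable [LieRingModule L V] [LieModule K L V]
  {M : ℕ → Set L} {B : Set L} {e : L} {c : K} {v : V}

theorem lie_mem_eigenspacesBelow {k : ℕ} {y : L} {w : V}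
    (hy : y ∈ (toEnd K L L e).eigenspace (-(k + 1)))
    (hw : w ∈ eigenspacesBelow (toEnd K L V e) c) :
    ⁅y, w⁆ ∈ eigenspacesBelow (toEnd K L V e) c := by
  have hle : eigenspacesBelow (toEnd K L V e) c ≤
      (eigenspacesBelow (toEnd K L V e) c).comap (toEnd K L V y) := by
    refine iSup_le fun i w hw => Submodule.mem_iSup_of_mem (i + k + 1) ?_
    have hcik : c - (i + 1) + -(k + 1) = c - ((i + k + 1 : ℕ) + 1) := by
      push_cast
      ring
    rw [← hcik]
    exact lie_mem_eigenspace_toEnd hy hw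
  exact hle hw

theorem lie_eq_zero_of_lie_mem_eigenspacesBelow [CharZero K]
    [IsSimpleOrder (LieSubmodule K L V)]
    (hMB : Submodule.span K ((⋃ k, M k) ∪ B) = ⊤)
    (hM : ∀ k, M k ⊆ (toEnd K L L e).eigenspace (-(k + 1)))
    (hB : ∀ z ∈ B, ∃ s : K, ⁅z, v⁆ = s • v)
    (hv : v ≠ 0) (hev : v ∈ (toEnd K L V e).eigenspace c) {J : LieIdeal K L}
    (hJ : ∀ z ∈ J, ⁅z, v⁆ ∈ eigenspacesBelow (toEnd K L V e) c) :
    ∀ z ∈ J, ∀ w : V, ⁅z, w⁆ = 0 := by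
  let X : Submodule K V := J.toSubmodule.map ((toEnd K L V : L →ₗ[K] Module.End K V).flip v)
  have hXY : X ≤ eigenspacesBelow (toEnd K L V e) c := Submodule.map_le_iff_le_comap.mpr hJ
  have hBX : ∀ z ∈ B, ∀ x ∈ X, ⁅z, x⁆ ∈ X := by
    rintro z hz _ ⟨y, hy, rfl⟩
    obtain ⟨s, hs⟩ := hB z hz
    have h : ⁅z, ⁅y, v⁆⁆ = ⁅⁅z, y⁆ + s • y, v⁆ := by
      rw [leibniz_lie, hs, add_lie, smul_lie, lie_smul]
    exact ⟨⁅z, y⁆ + s • y, add_mem (lie_mem_right K L J z y hy) (J.smul_mem s hy), h.symm⟩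
  have hspan := lieSpan_le_of_span_union_eq_top hMB hXY hBX fun z hz y hy => by
    obtain ⟨k, hk⟩ := Set.mem_iUnion.mp hz
    exact lie_mem_eigenspacesBelow (hM k hk) hy
  have hbot : LieSubmodule.lieSpan K L (X : Set V) = ⊥ := by
    refine (eq_bot_or_eq_top _).resolve_right fun htop => notMem_eigenspacesBelow hv hev ?_
    rw [htop] at hspan
    exact hspan Submodule.mem_top
  have hJv : v ∈ idealInvariants V J := fun z hz => by
    have hzv : ⁅z, v⁆ ∈ LieSubmodule.lieSpan K L (X : Set V) :=
      LieSubmodule.subset_lieSpan ⟨z, hz, rfl⟩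
    rwa [hbot] at hzv
  have htop : idealInvariants V J = ⊤ := by
    refine (eq_bot_or_eq_top _).resolve_left fun hbot => hv ?_
    rwa [hbot] at hJv
  intro z hz w
  have hw : w ∈ idealInvariants V J := htop ▸ LieSubmodule.mem_top w
  exact hw z hz

theorem iSup_gradedPiece_eq_top
    (hMB : Submodule.span K ((⋃ k, M k) ∪ B) = ⊤)
    (hB : ∀ z ∈ B, ∃ s : K, ⁅z, v⁆ = s • v)
    (hgen : LieSubmodule.lieSpan K L {v} = ⊤) :
    ⨆ n, gradedPiece (fun k => Submodule.span K (toEnd K L V '' M k)) v n = ⊤ := by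
  set Z := ⨆ n, gradedPiece (fun k => Submodule.span K (toEnd K L V '' M k)) v n
  have hvZ : Submodule.span K {v} ≤ Z := le_iSup_of_le 0 (by rw [gradedPiece])
  have hBv : ∀ z ∈ B, ∀ x ∈ Submodule.span K {v}, ⁅z, x⁆ ∈ Submodule.span K {v} := by
    intro z hz x hx
    obtain ⟨a, rfl⟩ := Submodule.mem_span_singleton.mp hx
    obtain ⟨s, hs⟩ := hB z hz
    rw [lie_smul, hs, smul_smul]
    exact Submodule.mem_span_singleton.mpr ⟨a * s, rfl⟩
  have hMZ : ∀ z ∈ ⋃ k, M k, ∀ y ∈ Z, ⁅z, y⁆ ∈ Z := by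
    intro z hz y hy
    obtain ⟨k, hk⟩ := Set.mem_iUnion.mp hz
    have hle : Z ≤ Z.comap (toEnd K L V z) :=
      iSup_le fun n w hw => Submodule.mem_iSup_of_mem (n + k + 1)
        (apply_mem_gradedPiece (Submodule.subset_span ⟨z, hk, rfl⟩) hw)
    exact hle hy
  have hspan := lieSpan_le_of_span_union_eq_top hMB hvZ hBv hMZ
  have hmono : LieSubmodule.lieSpan K L {v} ≤
      LieSubmodule.lieSpan K L (Submodule.span K {v} : Set V) :=
    LieSubmodule.lieSpan_mono Submodule.subset_span
  rw [hgen, top_le_iff] at hmono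
  rwa [hmono, LieSubmodule.top_toSubmodule, top_le_iff] at hspan

theorem finiteDimensional_eigenspace_toEnd [CharZero K]
    (hMB : Submodule.span K ((⋃ k, M k) ∪ B) = ⊤)
    (hM : ∀ k, M k ⊆ (toEnd K L L e).eigenspace (-(k + 1)))
    (hMfg : ∀ k, (Submodule.span K (toEnd K L V '' M k)).FG)
    (hB : ∀ z ∈ B, ∃ s : K, ⁅z, v⁆ = s • v)
    (hev : v ∈ (toEnd K L V e).eigenspace c)
    (hgen : LieSubmodule.lieSpan K L {v} = ⊤) (μ : K) :
    FiniteDimensional K ((toEnd K L V e).eigenspace μ) := by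
  refine finiteDimensional_eigenspace_of_iSup_eq_top (fg_gradedPiece hMfg v)
    (gradedPiece_le_eigenspace ?_ hev) (iSup_gradedPiece_eq_top hMB hB hgen) μ
  intro k t ht μ w hw
  have hle : Submodule.span K (toEnd K L V '' M k) ≤
      ((toEnd K L V e).eigenspace (μ - (k + 1))).comap (LinearMap.applyₗ (R := K) w) := by
    rw [Submodule.span_le]
    rintro _ ⟨y, hy, rfl⟩
    have hyw := lie_mem_eigenspace_toEnd (hM k hy) hw
    rwa [← sub_eq_add_neg] at hyw
  exact hle ht

end HighestWeightVector

end GradedModule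

theorem isCofiniteIdeal_iff_cofg {A : Type*} [CommRing A] [Algebra ℂ A] {I : Ideal A} :
    IsCofiniteIdeal I ↔ (I.restrictScalars ℂ).CoFG :=
  Module.Finite.equiv_iff (Submodule.Quotient.restrictScalarsEquiv ℂ I).symm

theorem IsCofiniteIdeal.inf {A : Type*} [CommRing A] [Algebra ℂ A] {I J : Ideal A}
    (hI : IsCofiniteIdeal I) (hJ : IsCofiniteIdeal J) : IsCofiniteIdeal (I ⊓ J) := by
  rw [isCofiniteIdeal_iff_cofg] at hI hJ ⊢
  rw [Submodule.restrictScalars_inf]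
  exact hI.inf hJ

theorem fg_map₂_top_of_cofg {K M U W : Type*} [Field K] [AddCommGroup M] [Module K M]
    [AddCommGroup U] [Module K U] [FiniteDimensional K U] [AddCommGroup W] [Module K W]
    {N : Submodule K M} (hN : N.CoFG) (f : U →ₗ[K] M →ₗ[K] W) (hf : ∀ x, ∀ y ∈ N, f x y = 0) :
    (Submodule.map₂ f ⊤ ⊤).FG := by
  obtain ⟨F, hF⟩ := N.exists_isCompl
  have hzero : Submodule.map₂ f ⊤ N = ⊥ :=
    le_bot_iff.mp (Submodule.map₂_le.mpr fun x _ y hy => (Submodule.mem_bot K).mpr (hf x y hy))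
  rw [← hF.sup_eq_top, Submodule.map₂_sup_right, hzero, bot_sup_eq]
  exact Module.Finite.fg_top.map₂ f (hN.fg_of_isCompl hF)

namespace LoopAffVir

open LieModule LieAlgebra

variable {g A L : Type*} [LieRing g] [LieAlgebra ℂ g] [CommRing A] [Algebra ℂ A]
  [LieRing L] [LieAlgebra ℂ L] (S : LoopAffVir g A L)

section Bracket

theorem lie_E_zero_E (n : ℤ) (x y : g) (a b : A) :
    ⁅S.E 0 x a, S.E n y b⁆ = S.E n ⁅x, y⁆ (a * b) := by
  rw [S.lie_EE, zero_add, Int.cast_zero, zero_mul, ite_self, zero_smul, add_zero]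

theorem lie_D_zero_D (n : ℤ) (a b : A) : ⁅S.D 0 a, S.D n b⁆ = (n : ℂ) • S.D n (a * b) := by
  simp [S.lie_DD]

theorem lie_E_D (n m : ℤ) (x : g) (a b : A) :
    ⁅S.E n x a, S.D m b⁆ = -(n : ℂ) • S.E (n + m) x (b * a) := by
  rw [← lie_skew, S.lie_DE, neg_smul]

theorem cartan_le_cartanA : S.cartan ≤ S.cartanA := by
  refine Submodule.span_le.mpr ?_
  rintro _ (⟨h, hh, rfl⟩ | rfl | rfl | rfl)
  · exact (S.eHA ⟨h, hh⟩ 1).2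
  · exact (S.KA 1).2
  · exact (S.DA0 1).2
  · exact (S.CA 1).2

end Bracket

section LoopIdeal

/-- The elements `X ⊗ a` of `𝔏 ⊗ a`, for `X = x ⊗ tⁿ`, `dₙ`, `K` or `C`. -/
def pureTensors (a : A) : Set L :=
  {z | (∃ n x, z = S.E n x a) ∨ (∃ n, z = S.D n a) ∨ z = S.K a ∨ z = S.C a}

theorem span_iUnion_pureTensors : Submodule.span ℂ (⋃ a, S.pureTensors a) = ⊤ := by
  rw [eq_top_iff, ← S.span_top]
  refine Submodule.span_mono ?_
  rintro _ (((⟨n, x, a, rfl⟩ | ⟨n, a, rfl⟩) | ⟨a, rfl⟩) | ⟨a, rfl⟩)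
  all_goals refine Set.mem_iUnion.mpr ⟨a, ?_⟩
  · exact Or.inl ⟨n, x, rfl⟩
  · exact Or.inr (Or.inl ⟨n, rfl⟩)
  · exact Or.inr (Or.inr (Or.inl rfl))
  · exact Or.inr (Or.inr (Or.inr rfl))

theorem lie_mem_span_pureTensors {a b : A} {y z : L} (hy : y ∈ S.pureTensors b)
    (hz : z ∈ S.pureTensors a) : ⁅y, z⁆ ∈ Submodule.span ℂ (S.pureTensors (b * a)) := by
  have hE : ∀ n x, S.E n x (b * a) ∈ Submodule.span ℂ (S.pureTensors (b * a)) := fun n x =>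
    Submodule.subset_span (Or.inl ⟨n, x, rfl⟩)
  have hD : ∀ n, S.D n (b * a) ∈ Submodule.span ℂ (S.pureTensors (b * a)) := fun n =>
    Submodule.subset_span (Or.inr (Or.inl ⟨n, rfl⟩))
  have hK : S.K (b * a) ∈ Submodule.span ℂ (S.pureTensors (b * a)) :=
    Submodule.subset_span (Or.inr (Or.inr (Or.inl rfl)))
  have hC : S.C (b * a) ∈ Submodule.span ℂ (S.pureTensors (b * a)) :=
    Submodule.subset_span (Or.inr (Or.inr (Or.inr rfl)))
  rcases hy with ⟨n, x, rfl⟩ | ⟨n, rfl⟩ | rfl | rfl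
  · rcases hz with ⟨m, w, rfl⟩ | ⟨m, rfl⟩ | rfl | rfl
    · rw [S.lie_EE]
      exact add_mem (hE _ _) (Submodule.smul_mem _ _ hK)
    · rw [S.lie_E_D, mul_comm a b]
      exact Submodule.smul_mem _ _ (hE _ _)
    · rw [← lie_skew, S.K_central, neg_zero]
      exact zero_mem _
    · rw [← lie_skew, S.C_central, neg_zero]
      exact zero_mem _
  · rcases hz with ⟨m, w, rfl⟩ | ⟨m, rfl⟩ | rfl | rfl
    · rw [S.lie_DE]
      exact Submodule.smul_mem _ _ (hE _ _)
    · rw [S.lie_DD]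
      exact add_mem (Submodule.smul_mem _ _ (hD _)) (Submodule.smul_mem _ _ hC)
    · rw [← lie_skew, S.K_central, neg_zero]
      exact zero_mem _
    · rw [← lie_skew, S.C_central, neg_zero]
      exact zero_mem _
  · rw [S.K_central]
    exact zero_mem _
  · rw [S.C_central]
    exact zero_mem _

/-- The ideal `𝔏 ⊗ I` of `𝔏(A)`. -/
def loopIdeal (I : Ideal A) : LieIdeal ℂ L where
  toSubmodule := Submodule.span ℂ (⋃ a ∈ I, S.pureTensors a)
  lie_mem {y z} hz := by
    have hle : Submodule.map₂ (toEnd ℂ L L : L →ₗ[ℂ] Module.End ℂ L) ⊤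
        (Submodule.span ℂ (⋃ a ∈ I, S.pureTensors a)) ≤
        Submodule.span ℂ (⋃ a ∈ I, S.pureTensors a) := by
      rw [← S.span_iUnion_pureTensors, Submodule.map₂_span_span, Submodule.span_le]
      rintro _ ⟨y, hy, z, hz, rfl⟩
      obtain ⟨b, hy⟩ := Set.mem_iUnion.mp hy
      obtain ⟨a, ha, hz⟩ := Set.mem_iUnion₂.mp hz
      have hba := Set.subset_biUnion_of_mem (u := S.pureTensors) (I.mul_mem_left b ha)
      exact Submodule.span_mono hba (S.lie_mem_span_pureTensors hy hz)
    exact hle (Submodule.apply_mem_map₂ _ Submodule.mem_top hz)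

theorem mem_loopIdeal_of_mem_pureTensors {I : Ideal A} {a : A} (ha : a ∈ I) {z : L}
    (hz : z ∈ S.pureTensors a) : z ∈ S.loopIdeal I :=
  Submodule.subset_span (Set.mem_biUnion ha hz)

end LoopIdeal

section Grading

/-- The elements `h ⊗ a` of `h̄ ⊗ a`, for `h ∈ h̊` or `h = K`, `d₀`, `C`. -/
def cartanTensors (a : A) : Set L :=
  {z | (∃ h ∈ S.H, z = S.E 0 h a) ∨ z = S.K a ∨ z = S.D 0 a ∨ z = S.C a}

theorem cartanTensors_subset_cartanA (a : A) : S.cartanTensors a ⊆ S.cartanA := by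
  rintro _ (⟨h, hh, rfl⟩ | rfl | rfl | rfl)
  · exact (S.eHA ⟨h, hh⟩ a).2
  · exact (S.KA a).2
  · exact (S.DA0 a).2
  · exact (S.CA a).2

/-- The element `(N + 1) d₀ + h` of `h̄`. When the eigenvalues of `ad h` on `g̊` are at most `N`,
every `x ⊗ tⁿ` and `dₙ` with `n < 0` has negative degree for it. -/
def gradingElement (h : S.H) (N : ℕ) : S.cartan :=
  ((N : ℂ) + 1) • S.d0 + S.eH h

theorem lie_gradingElement_E {h : S.H} {x : g} {d : ℤ} (hx : ⁅(h : g), x⁆ = (d : ℂ) • x) (N : ℕ)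
    (n : ℤ) (a : A) :
    ⁅(S.gradingElement h N : L), S.E n x a⁆ = (((N + 1) * n + d : ℤ) : ℂ) • S.E n x a := by
  change ⁅((N : ℂ) + 1) • S.D 0 1 + S.E 0 h 1, S.E n x a⁆ = _
  rw [add_lie, smul_lie, S.lie_DE, S.lie_E_zero_E, one_mul, add_zero, hx, map_smul,
    LinearMap.smul_apply, smul_smul, ← add_smul]
  push_cast
  rfl

theorem lie_gradingElement_D (h : S.H) (N : ℕ) (n : ℤ) (a : A) :
    ⁅(S.gradingElement h N : L), S.D n a⁆ = (((N + 1) * n : ℤ) : ℂ) • S.D n a := by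
  change ⁅((N : ℂ) + 1) • S.D 0 1 + S.E 0 h 1, S.D n a⁆ = _
  rw [add_lie, smul_lie, S.lie_D_zero_D, S.lie_E_D, one_mul, Int.cast_zero, neg_zero, zero_smul,
    add_zero, smul_smul]
  push_cast
  rfl

/-- The elements `(x ⊗ tⁿ) ⊗ a` and `dₙ ⊗ a` of degree `-(k + 1)` for `ad e` with `|n| ≤ k + 1`.
The bound on `n` leaves finitely many modes for each `k`. -/
def loweringSet (e : L) (k : ℕ) : Set L :=
  {z | ⁅e, z⁆ = -((k : ℂ) + 1) • z ∧
    ∃ n : ℤ, |n| ≤ k + 1 ∧ ((∃ x a, z = S.E n x a) ∨ ∃ a, z = S.D n a)}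

theorem loweringSet_subset_eigenspace (e : L) (k : ℕ) :
    S.loweringSet e k ⊆ (toEnd ℂ L L e).eigenspace (-((k : ℂ) + 1)) :=
  fun _ hz => Module.End.mem_eigenspace_iff.mpr hz.1

theorem mem_iUnion_loweringSet {e z : L} {n d : ℤ} (hez : ⁅e, z⁆ = (d : ℂ) • z) (hd : d < 0)
    (hnd : |n| ≤ -d) (hz : (∃ x a, z = S.E n x a) ∨ ∃ a, z = S.D n a) :
    z ∈ ⋃ k, S.loweringSet e k := by
  obtain ⟨k, rfl⟩ : ∃ k : ℕ, d = -((k : ℤ) + 1) := ⟨(-d - 1).toNat, by lia⟩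
  refine Set.mem_iUnion.mpr ⟨k, ?_, n, by lia, hz⟩
  rw [hez]
  push_cast
  rfl

theorem E_mem_iUnion_loweringSet {h : S.H} {x : g} {d : ℤ} (hx : ⁅(h : g), x⁆ = (d : ℂ) • x)
    {N : ℕ} (hd : d ≤ N) {n : ℤ} (hn : n < 0 ∨ n = 0 ∧ d < 0) (a : A) :
    S.E n x a ∈ ⋃ k, S.loweringSet (S.gradingElement h N) k := by
  have hdeg : (N + 1) * n + d < 0 ∧ |n| ≤ -((N + 1) * n + d) := by
    rcases hn with hn | ⟨rfl, hd0⟩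
    · have hNn : (N : ℤ) * n ≤ -N := by nlinarith
      rw [abs_of_neg hn, add_mul, one_mul]
      lia
    · rw [abs_zero]
      lia
  exact S.mem_iUnion_loweringSet (S.lie_gradingElement_E hx N n a) hdeg.1 hdeg.2
    (Or.inl ⟨x, a, rfl⟩)

theorem D_mem_iUnion_loweringSet (h : S.H) (N : ℕ) {n : ℤ} (hn : n < 0) (a : A) :
    S.D n a ∈ ⋃ k, S.loweringSet (S.gradingElement h N) k := by
  have hdeg : (N + 1) * n < 0 ∧ |n| ≤ -((N + 1) * n) := by
    rw [abs_of_neg hn]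
    constructor <;> nlinarith
  exact S.mem_iUnion_loweringSet (S.lie_gradingElement_D h N n a) hdeg.1 hdeg.2 (Or.inr ⟨a, rfl⟩)

variable {V : Type*} [AddCommGroup V] [Module ℂ V] [LieRingModule L V] [LieModule ℂ L V]

/-- The `x ∈ g̊` such that all `x ⊗ a` kill `v`, as a subalgebra. -/
def zeroModeStabilizer (v : V) : LieSubalgebra ℂ g where
  carrier := {x | ∀ a, ⁅S.E 0 x a, v⁆ = 0}
  add_mem' {x y} hx hy a := by
    rw [map_add, LinearMap.add_apply, add_lie, hx a, hy a, add_zero]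
  zero_mem' a := by rw [map_zero, LinearMap.zero_apply, zero_lie]
  smul_mem' t x hx a := by rw [map_smul, LinearMap.smul_apply, smul_lie, hx a, smul_zero]
  lie_mem' {x y} hx hy a := by
    rw [← one_mul a, ← S.lie_E_zero_E, lie_lie, hx 1, hy a, lie_zero, lie_zero, sub_zero]

section Roots

variable [FiniteDimensional ℂ g] [LieAlgebra.IsKilling ℂ g]

theorem rootSpace_le_rootSp [S.H.IsCartanSubalgebra] (α : Module.Dual ℂ S.H) :
    (rootSpace S.H α).toSubmodule ≤ S.rootSp α := fun _ hx =>
  (S.rootSp_def _ _).mpr fun h => IsKilling.lie_eq_smul_of_mem_rootSpace hx h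

theorem rootSpace_le_zeroModeStabilizer_or [S.H.IsCartanSubalgebra] {v : V}
    (hv : ∀ z ∈ S.plusSet, ⁅z, v⁆ = 0) (α : S.H.root) :
    (rootSpace S.H α.1).toSubmodule ≤ (S.zeroModeStabilizer v).toSubmodule ∨
      (rootSpace S.H (-α.1)).toSubmodule ≤ (S.zeroModeStabilizer v).toSubmodule := by
  have hplus : ∀ β ∈ S.Δplus,
      (rootSpace S.H β).toSubmodule ≤ (S.zeroModeStabilizer v).toSubmodule :=
    fun β hβ x hx a => hv _ (Or.inl (Or.inr ⟨β, hβ, x, S.rootSpace_le_rootSp β hx, a, rfl⟩))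
  have hα0 : Weight.toLinear ℂ S.H g α.1 ≠ 0 := by simp
  have hbot : S.rootSp (Weight.toLinear ℂ S.H g α.1) ≠ ⊥ := by
    obtain ⟨x, hx, hx0⟩ := α.1.exists_ne_zero
    exact fun h => hx0 ((Submodule.eq_bot_iff _).mp h x (S.rootSpace_le_rootSp _ hx))
  have hcoe : (Weight.toLinear ℂ S.H g α.1 : S.H → ℂ) = α.1 := rfl
  have hneg : ((-Weight.toLinear ℂ S.H g α.1 : Module.Dual ℂ S.H) : S.H → ℂ) = -α.1 := rfl
  rw [← hneg, ← hcoe]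
  exact (S.Δplus_cover _ hα0 hbot).imp (hplus _) (hplus _)

theorem exists_pureTensors_subset_span {v : V} (hv : ∀ z ∈ S.plusSet, ⁅z, v⁆ = 0) :
    ∃ e : S.cartan, ∀ a, S.pureTensors a ⊆ Submodule.span ℂ
      ((⋃ k, S.loweringSet e k) ∪ ({z | ⁅z, v⁆ = 0} ∪ S.cartanTensors a)) := by
  have := S.isCartan
  obtain ⟨h, hh, N, hN⟩ := exists_span_eigenvectors_eq_top (H := S.H) (S.zeroModeStabilizer v)
    (S.rootSpace_le_zeroModeStabilizer_or hv)
  refine ⟨S.gradingElement ⟨h, hh⟩ N, fun a => ?_⟩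
  set lowering := ⋃ k, S.loweringSet (S.gradingElement ⟨h, hh⟩ N) k
  set T := Submodule.span ℂ (lowering ∪ ({z | ⁅z, v⁆ = 0} ∪ S.cartanTensors a))
  have hlow : ∀ z ∈ lowering, z ∈ T := fun z hz => Submodule.subset_span (Or.inl hz)
  have hkill : ∀ z, ⁅z, v⁆ = 0 → z ∈ T := fun z hz => Submodule.subset_span (Or.inr (Or.inl hz))
  have hcartan : ∀ z ∈ S.cartanTensors a, z ∈ T := fun z hz =>
    Submodule.subset_span (Or.inr (Or.inr hz))
  rintro _ (⟨n, x, rfl⟩ | ⟨n, rfl⟩ | rfl | rfl)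
  · suffices hle : {x | ∃ d : ℤ, d ≤ N ∧ ⁅h, x⁆ = (d : ℂ) • x ∧
        (x ∈ S.H ∨ x ∈ S.zeroModeStabilizer v ∨ d < 0)} ⊆ T.comap ((S.E n).flip a) by
      rw [← Submodule.span_le, hN] at hle
      exact hle Submodule.mem_top
    rintro x ⟨d, hdN, hdx, hx⟩
    rcases lt_trichotomy n 0 with hn | rfl | hn
    · exact hlow _ (S.E_mem_iUnion_loweringSet (h := ⟨h, hh⟩) hdx hdN (Or.inl hn) a)
    · rcases hx with hx | hx | hd
      · exact hcartan _ (Or.inl ⟨x, hx, rfl⟩)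
      · exact hkill _ (hx a)
      · exact hlow _ (S.E_mem_iUnion_loweringSet (h := ⟨h, hh⟩) hdx hdN (Or.inr ⟨rfl, hd⟩) a)
    · exact hkill _ (hv _ (Or.inl (Or.inl ⟨n, hn, x, a, rfl⟩)))
  · rcases lt_trichotomy n 0 with hn | rfl | hn
    · exact hlow _ (S.D_mem_iUnion_loweringSet ⟨h, hh⟩ N hn a)
    · exact hcartan _ (Or.inr (Or.inr (Or.inl rfl)))
    · exact hkill _ (hv _ (Or.inr ⟨n, hn, a, rfl⟩))
  · exact hcartan _ (Or.inr (Or.inl rfl))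
  · exact hcartan _ (Or.inr (Or.inr (Or.inr rfl)))

end Roots

end Grading

section HighestWeightModule

/-- The functional `ψ` vanishes on `h̄ ⊗ I`. -/
def VanishesOn (ψ : Module.Dual ℂ S.cartanA) (I : Ideal A) : Prop :=
  ∀ (h : S.H) (a : A), a ∈ I →
    ψ (S.eHA h a) = 0 ∧ ψ (S.KA a) = 0 ∧ ψ (S.DA0 a) = 0 ∧ ψ (S.CA a) = 0

variable {V : Type*} [AddCommGroup V] [Module ℂ V] [LieRingModule L V]
  {ψ : Module.Dual ℂ S.cartanA} {v : V}

theorem lie_eq_zero_of_vanishesOn (hψ : ∀ h : S.cartanA, ⁅(h : L), v⁆ = ψ h • v) {I : Ideal A}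
    (hI : S.VanishesOn ψ I) {a : A} (ha : a ∈ I) {z : L} (hz : z ∈ S.cartanTensors a) :
    ⁅z, v⁆ = 0 := by
  rcases hz with ⟨h, hh, rfl⟩ | rfl | rfl | rfl
  · exact (hψ (S.eHA ⟨h, hh⟩ a)).trans (by rw [(hI ⟨h, hh⟩ a ha).1, zero_smul])
  · exact (hψ (S.KA a)).trans (by rw [(hI 0 a ha).2.1, zero_smul])
  · exact (hψ (S.DA0 a)).trans (by rw [(hI 0 a ha).2.2.1, zero_smul])
  · exact (hψ (S.CA a)).trans (by rw [(hI 0 a ha).2.2.2, zero_smul])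

theorem vanishesOn_of_lie_eq_zero (hψ : ∀ h : S.cartanA, ⁅(h : L), v⁆ = ψ h • v) (hv0 : v ≠ 0)
    {I : Ideal A} (hI : ∀ a ∈ I, ∀ z ∈ S.cartanTensors a, ⁅z, v⁆ = 0) : S.VanishesOn ψ I := by
  have hψ0 : ∀ z : S.cartanA, ⁅(z : L), v⁆ = 0 → ψ z = 0 := fun z hz => by
    rw [hψ] at hz
    exact (smul_eq_zero.mp hz).resolve_right hv0
  refine fun h a ha => ⟨hψ0 _ (hI a ha _ ?_), hψ0 _ (hI a ha _ ?_), hψ0 _ (hI a ha _ ?_),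
    hψ0 _ (hI a ha _ ?_)⟩
  · exact Or.inl ⟨h, h.2, rfl⟩
  · exact Or.inr (Or.inl rfl)
  · exact Or.inr (Or.inr (Or.inl rfl))
  · exact Or.inr (Or.inr (Or.inr rfl))

theorem span_loweringSet_union_eq_top (hψ : ∀ h : S.cartanA, ⁅(h : L), v⁆ = ψ h • v) {e : L}
    (he : ∀ a, S.pureTensors a ⊆ Submodule.span ℂ
      ((⋃ k, S.loweringSet e k) ∪ ({z | ⁅z, v⁆ = 0} ∪ S.cartanTensors a))) :
    Submodule.span ℂ ((⋃ k, S.loweringSet e k) ∪ {z | ∃ s : ℂ, ⁅z, v⁆ = s • v}) = ⊤ := by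
  rw [← top_le_iff, ← S.span_iUnion_pureTensors, Submodule.span_le, Set.iUnion_subset_iff]
  refine fun a => (he a).trans (Submodule.span_mono (Set.union_subset_union_right _ ?_))
  rintro z (hz | hz)
  · exact ⟨0, by rw [zero_smul, hz]⟩
  · exact ⟨ψ ⟨z, S.cartanTensors_subset_cartanA a hz⟩, hψ ⟨z, S.cartanTensors_subset_cartanA a hz⟩⟩

variable [LieModule ℂ L V]

theorem lie_mem_eigenspacesBelow_of_mem_loopIdeal
    (hψ : ∀ h : S.cartanA, ⁅(h : L), v⁆ = ψ h • v) {I : Ideal A} (hI : S.VanishesOn ψ I)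
    {e : S.cartan} {c : ℂ} (hev : v ∈ (toEnd ℂ L V e).eigenspace c)
    (he : ∀ a, S.pureTensors a ⊆ Submodule.span ℂ
      ((⋃ k, S.loweringSet e k) ∪ ({z | ⁅z, v⁆ = 0} ∪ S.cartanTensors a)))
    {z : L} (hz : z ∈ S.loopIdeal I) : ⁅z, v⁆ ∈ eigenspacesBelow (toEnd ℂ L V e) c := by
  suffices hle : (S.loopIdeal I).toSubmodule ≤ (eigenspacesBelow (toEnd ℂ L V e) c).comap
      ((toEnd ℂ L V : L →ₗ[ℂ] Module.End ℂ V).flip v) from hle hz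
  refine Submodule.span_le.mpr (Set.iUnion₂_subset fun a ha => (he a).trans ?_)
  refine Submodule.span_le.mpr ?_
  rintro y (hy | hy | hy)
  · obtain ⟨k, hk⟩ := Set.mem_iUnion.mp hy
    refine Submodule.mem_iSup_of_mem k ?_
    rw [sub_eq_add_neg]
    exact lie_mem_eigenspace_toEnd (S.loweringSet_subset_eigenspace e k hk) hev
  · change ⁅y, v⁆ ∈ eigenspacesBelow (toEnd ℂ L V e) c
    rw [hy]
    exact zero_mem _
  · change ⁅y, v⁆ ∈ eigenspacesBelow (toEnd ℂ L V e) c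
    rw [S.lie_eq_zero_of_vanishesOn hψ hI ha hy]
    exact zero_mem _

theorem annihilates_of_vanishesOn [FiniteDimensional ℂ g] [LieAlgebra.IsKilling ℂ g]
    [IsSimpleOrder (LieSubmodule ℂ L V)] (hHW : S.IsHWModule V ψ) {I : Ideal A}
    (hI : S.VanishesOn ψ I) : S.Annihilates V I := by
  obtain ⟨v, hv0, hv, hψ, -⟩ := hHW
  obtain ⟨e, he⟩ := S.exists_pureTensors_subset_span hv
  have hev : v ∈ (toEnd ℂ L V e).eigenspace (ψ ⟨e, S.cartan_le_cartanA e.2⟩) :=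
    Module.End.mem_eigenspace_iff.mpr (hψ ⟨e, S.cartan_le_cartanA e.2⟩)
  have hzero : ∀ z ∈ S.loopIdeal I, ∀ w : V, ⁅z, w⁆ = 0 :=
    lie_eq_zero_of_lie_mem_eigenspacesBelow (S.span_loweringSet_union_eq_top hψ he)
      (S.loweringSet_subset_eigenspace e) (fun _ hz => hz) hv0 hev fun _ hz =>
        S.lie_mem_eigenspacesBelow_of_mem_loopIdeal hψ hI hev he hz
  refine fun a ha => ⟨fun n x => hzero _ ?_, fun n => hzero _ ?_, hzero _ ?_, hzero _ ?_⟩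
  all_goals apply S.mem_loopIdeal_of_mem_pureTensors ha
  · exact Or.inl ⟨n, x, rfl⟩
  · exact Or.inr (Or.inl ⟨n, rfl⟩)
  · exact Or.inr (Or.inr (Or.inl rfl))
  · exact Or.inr (Or.inr (Or.inr rfl))

theorem finiteDimensional_span_image_loweringSet [FiniteDimensional ℂ g] {I : Ideal A}
    (hcof : IsCofiniteIdeal I) (hann : S.Annihilates V I) (e : L) (k : ℕ) :
    FiniteDimensional ℂ (Submodule.span ℂ (toEnd ℂ L V '' S.loweringSet e k)) := by
  let ρ : L →ₗ[ℂ] Module.End ℂ V := (toEnd ℂ L V : L →ₗ[ℂ] Module.End ℂ V)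
  let T : ℤ → Submodule ℂ (Module.End ℂ V) := fun n =>
    Submodule.map₂ ((S.E n).compr₂ ρ) ⊤ ⊤ ⊔ LinearMap.range (ρ ∘ₗ S.D n)
  have hT : ∀ n, FiniteDimensional ℂ (T n) := fun n => by
    have hI := isCofiniteIdeal_iff_cofg.mp hcof
    have hE := fg_map₂_top_of_cofg hI ((S.E n).compr₂ ρ)
      fun x a ha => LinearMap.ext ((hann a ha).1 n x)
    have hD : (LinearMap.range (ρ ∘ₗ S.D n)).FG := Submodule.range_fg_iff_ker_cofg.mpr
      (hI.of_le fun a ha => LinearMap.ext ((hann a ha).2.1 n))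
    exact Module.Finite.iff_fg.mpr (hE.sup hD)
  have hfin : FiniteDimensional ℂ
      (⨆ n : Finset.Icc (-((k : ℤ) + 1)) (k + 1), T n : Submodule ℂ (Module.End ℂ V)) :=
    Submodule.finiteDimensional_iSup _
  refine Submodule.finiteDimensional_of_le
    (S₂ := ⨆ n : Finset.Icc (-((k : ℤ) + 1)) (k + 1), T n) (Submodule.span_le.mpr ?_)
  rintro _ ⟨z, ⟨-, n, hn, hz⟩, rfl⟩
  refine Submodule.mem_iSup_of_mem ⟨n, Finset.mem_Icc.mpr (abs_le.mp hn)⟩ ?_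
  rcases hz with ⟨x, a, rfl⟩ | ⟨a, rfl⟩
  · exact Submodule.mem_sup_left
      (Submodule.apply_mem_map₂ ((S.E n).compr₂ ρ) Submodule.mem_top Submodule.mem_top)
  · exact Submodule.mem_sup_right ⟨a, rfl⟩

theorem hasFinDimWeightSpaces_of_vanishesOn [FiniteDimensional ℂ g] [LieAlgebra.IsKilling ℂ g]
    [IsSimpleOrder (LieSubmodule ℂ L V)] (hHW : S.IsHWModule V ψ) {I : Ideal A}
    (hcof : IsCofiniteIdeal I) (hI : S.VanishesOn ψ I) : S.HasFinDimWeightSpaces V := by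
  have hann := S.annihilates_of_vanishesOn hHW hI
  obtain ⟨v, -, hv, hψ, hgen⟩ := hHW
  obtain ⟨e, he⟩ := S.exists_pureTensors_subset_span hv
  have hev : v ∈ (toEnd ℂ L V e).eigenspace (ψ ⟨e, S.cartan_le_cartanA e.2⟩) :=
    Module.End.mem_eigenspace_iff.mpr (hψ ⟨e, S.cartan_le_cartanA e.2⟩)
  intro χ
  have hfin : FiniteDimensional ℂ ((toEnd ℂ L V e).eigenspace (χ e)) :=
    finiteDimensional_eigenspace_toEnd (S.span_loweringSet_union_eq_top hψ he)
      (S.loweringSet_subset_eigenspace e)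
      (fun k => Module.Finite.iff_fg.mp (S.finiteDimensional_span_image_loweringSet hcof hann e k))
      (fun _ hz => hz) hev (hgen _ (LieSubmodule.subset_lieSpan rfl)) (χ e)
  exact Submodule.finiteDimensional_of_le (S₂ := (toEnd ℂ L V e).eigenspace (χ e))
    fun w hw => Module.End.mem_eigenspace_iff.mpr (hw e)

theorem finiteDimensional_of_hasFinDimWeightSpaces (hfd : S.HasFinDimWeightSpaces V)
    {X : Submodule ℂ V} (hX : ∀ z ∈ S.cartan, ∃ s : ℂ, ∀ x ∈ X, ⁅z, x⁆ = s • x) :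
    FiniteDimensional ℂ X := by
  by_cases hbot : X = ⊥
  · rw [hbot]
    infer_instance
  obtain ⟨x₀, hx₀, hne⟩ := Submodule.exists_mem_ne_zero_of_ne_bot hbot
  choose s hs using fun z : S.cartan => hX z z.2
  let χ : Module.Dual ℂ S.cartan :=
    { toFun := s
      map_add' := fun y z => smul_left_injective ℂ hne (by
        simp only [add_smul, ← hs _ x₀ hx₀, Submodule.coe_add, add_lie])
      map_smul' := fun t z => smul_left_injective ℂ hne (by
        simp only [RingHom.id_apply, smul_eq_mul, mul_smul, ← hs _ x₀ hx₀, Submodule.coe_smul,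
          smul_lie]) }
  have := hfd χ
  exact Submodule.finiteDimensional_of_le (S₂ := S.wtSpace V χ) fun x hx z => hs z x hx

theorem exists_isCofiniteIdeal_lie_eq_zero (hfd : S.HasFinDimWeightSpaces V)
    (hψ : ∀ h : S.cartanA, ⁅(h : L), v⁆ = ψ h • v) {φ : A →ₗ[ℂ] L}
    (hφ : ∀ z ∈ S.cartanSet, ∃ s : ℂ, ∀ x ∈ Set.range φ, ⁅z, x⁆ = s • x) {r : ℂ} (hr : r ≠ 0)
    (hD : ∀ a b, ⁅S.D 0 b, φ a⁆ = r • φ (b * a)) :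
    ∃ I : Ideal A, IsCofiniteIdeal I ∧ ∀ a ∈ I, ⁅φ a, v⁆ = 0 := by
  let f : A →ₗ[ℂ] V := (toEnd ℂ L V : L →ₗ[ℂ] Module.End ℂ V).flip v ∘ₗ φ
  let I : Ideal A :=
    { LinearMap.ker f with
      smul_mem' := fun b a ha => by
        have ha' : ⁅φ a, v⁆ = 0 := ha
        have hb : ⁅S.D 0 b, v⁆ = ψ (S.DA0 b) • v := hψ (S.DA0 b)
        have h := leibniz_lie (S.D 0 b) (φ a) v
        rw [ha', lie_zero, hD, hb, lie_smul, ha', smul_zero, add_zero, smul_lie] at h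
        exact (smul_eq_zero.mp h.symm).resolve_left hr }
  have hfin : FiniteDimensional ℂ (LinearMap.range f) := by
    refine S.finiteDimensional_of_hasFinDimWeightSpaces hfd fun z hz => ?_
    obtain ⟨s, hs⟩ := exists_lie_eq_smul_of_mem_span hφ hz
    refine ⟨s + ψ ⟨z, S.cartan_le_cartanA hz⟩, ?_⟩
    rintro _ ⟨a, rfl⟩
    have hzv : ⁅z, v⁆ = ψ ⟨z, S.cartan_le_cartanA hz⟩ • v := hψ ⟨z, S.cartan_le_cartanA hz⟩
    change ⁅z, ⁅φ a, v⁆⁆ = _ • ⁅φ a, v⁆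
    rw [leibniz_lie, hs _ ⟨a, rfl⟩, hzv, smul_lie, lie_smul, add_smul]
  exact ⟨I, isCofiniteIdeal_iff_cofg.mpr
    (Submodule.range_fg_iff_ker_cofg.mp (Module.Finite.iff_fg.mp hfin)), fun a ha => ha⟩

theorem exists_isCofiniteIdeal_lie_D_eq_zero (hfd : S.HasFinDimWeightSpaces V)
    (hψ : ∀ h : S.cartanA, ⁅(h : L), v⁆ = ψ h • v) {n : ℤ} (hn : n ≠ 0) :
    ∃ I : Ideal A, IsCofiniteIdeal I ∧ ∀ a ∈ I, ⁅S.D n a, v⁆ = 0 := by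
  refine S.exists_isCofiniteIdeal_lie_eq_zero hfd hψ (φ := S.D n) ?_ (Int.cast_ne_zero.mpr hn)
    fun a b => S.lie_D_zero_D n b a
  simp only [Set.forall_mem_range]
  rintro _ (⟨h, -, rfl⟩ | rfl | rfl | rfl)
  · exact ⟨0, fun a => by rw [S.lie_E_D, Int.cast_zero, neg_zero, zero_smul, zero_smul]⟩
  · exact ⟨0, fun a => by rw [S.K_central, zero_smul]⟩
  · exact ⟨n, fun a => by rw [S.lie_D_zero_D, one_mul]⟩
  · exact ⟨0, fun a => by rw [S.C_central, zero_smul]⟩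

section Killing

variable [FiniteDimensional ℂ g] [LieAlgebra.IsKilling ℂ g]

theorem exists_isCofiniteIdeal_lie_E_eq_zero (hfd : S.HasFinDimWeightSpaces V)
    (hψ : ∀ h : S.cartanA, ⁅(h : L), v⁆ = ψ h • v) {n : ℤ} (hn : n ≠ 0) (h : S.H) :
    ∃ I : Ideal A, IsCofiniteIdeal I ∧ ∀ a ∈ I, ⁅S.E n h a, v⁆ = 0 := by
  have := S.isCartan
  refine S.exists_isCofiniteIdeal_lie_eq_zero hfd hψ (φ := S.E n h) ?_ (Int.cast_ne_zero.mpr hn)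
    fun a b => by rw [S.lie_DE, add_zero]
  simp only [Set.forall_mem_range]
  rintro _ (⟨h', hh', rfl⟩ | rfl | rfl | rfl)
  · have hab : ⁅h', (h : g)⁆ = 0 := congrArg Subtype.val (trivial_lie_zero S.H S.H ⟨h', hh'⟩ h)
    exact ⟨0, fun a => by rw [S.lie_E_zero_E, hab, map_zero, LinearMap.zero_apply, zero_smul]⟩
  · exact ⟨0, fun a => by rw [S.K_central, zero_smul]⟩
  · exact ⟨n, fun a => by rw [S.lie_DE, one_mul, add_zero]⟩
  · exact ⟨0, fun a => by rw [S.C_central, zero_smul]⟩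

theorem exists_isCofiniteIdeal_forall_lie_E_eq_zero (hfd : S.HasFinDimWeightSpaces V)
    (hψ : ∀ h : S.cartanA, ⁅(h : L), v⁆ = ψ h • v) {n : ℤ} (hn : n ≠ 0) :
    ∃ I : Ideal A, IsCofiniteIdeal I ∧ ∀ a ∈ I, ∀ h ∈ S.H, ⁅S.E n h a, v⁆ = 0 := by
  let b := Module.finBasis ℂ S.H
  choose J hJ hJE using fun i => S.exists_isCofiniteIdeal_lie_E_eq_zero hfd hψ hn (b i)
  have hcofg : (⨅ i, (J i).restrictScalars ℂ).CoFG :=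
    Submodule.CoFG.sInf_of_finite (Set.finite_range _)
      (Set.forall_mem_range.mpr fun i => isCofiniteIdeal_iff_cofg.mp (hJ i))
  refine ⟨⨅ i, J i, isCofiniteIdeal_iff_cofg.mpr (hcofg.of_le fun a ha => ?_), fun a ha h hh => ?_⟩
  · exact Submodule.mem_iInf _ |>.mpr fun i => Submodule.mem_iInf _ |>.mp ha i
  · let f : S.H →ₗ[ℂ] V := (toEnd ℂ L V : L →ₗ[ℂ] Module.End ℂ V).flip v ∘ₗ
      (S.E n).flip a ∘ₗ S.H.toSubmodule.subtype
    have hf : f = 0 := b.ext fun i => hJE i a (Submodule.mem_iInf _ |>.mp ha i)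
    exact LinearMap.congr_fun hf ⟨h, hh⟩

theorem lie_eq_zero_of_mem_cartanTensors [Nontrivial g] (hv : ∀ z ∈ S.plusSet, ⁅z, v⁆ = 0)
    {a : A} (hD₁ : ⁅S.D (-1) a, v⁆ = 0) (hD₂ : ⁅S.D (-2) a, v⁆ = 0)
    (hE : ∀ h ∈ S.H, ⁅S.E (-1) h a, v⁆ = 0) {z : L} (hz : z ∈ S.cartanTensors a) :
    ⁅z, v⁆ = 0 := by
  have := S.isCartan
  have hplus : ∀ z ∈ S.plusSet, ∀ y : L, ⁅y, v⁆ = 0 → ⁅⁅z, y⁆, v⁆ = 0 := fun z hz y hy => by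
    rw [lie_lie, hy, hv z hz, lie_zero, lie_zero, sub_zero]
  have hDplus : ∀ n : ℤ, 0 < n → S.D n 1 ∈ S.plusSet := fun n hn => Or.inr ⟨n, hn, 1, rfl⟩
  have hE₀ : ∀ h ∈ S.H, ⁅S.E 0 h a, v⁆ = 0 := by
    intro h hh
    have h₀ := hplus _ (hDplus 1 one_pos) _ (hE h hh)
    rw [S.lie_DE, one_mul] at h₀
    simpa using h₀
  have hD₀ : ⁅S.D 0 a, v⁆ = 0 := by
    have h₀ := hplus _ (hDplus 1 one_pos) _ hD₁
    rw [S.lie_DD, one_mul] at h₀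
    norm_num at h₀
    exact h₀
  rcases hz with ⟨h, hh, rfl⟩ | rfl | rfl | rfl
  · exact hE₀ h hh
  · obtain ⟨x, hx, y, hy, hxy⟩ := exists_apply_ne_zero_of_isCartanSubalgebra S.H
      S.form_invariant S.form_nondeg
    have hK := hplus (S.E 1 x 1) (Or.inl (Or.inl ⟨1, one_pos, x, 1, rfl⟩)) _ (hE y hy)
    rw [S.lie_EE, one_mul, add_lie] at hK
    simpa [hE₀ _ (S.H.lie_mem hx hy), hxy] using hK
  · exact hD₀
  · have hC := hplus _ (hDplus 2 two_pos) _ hD₂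
    rw [S.lie_DD, one_mul, add_lie] at hC
    norm_num [hD₀] at hC
    exact hC

theorem exists_isCofiniteIdeal_vanishesOn [Nontrivial g] (hHW : S.IsHWModule V ψ)
    (hfd : S.HasFinDimWeightSpaces V) :
    ∃ I : Ideal A, IsCofiniteIdeal I ∧ S.VanishesOn ψ I := by
  obtain ⟨v, hv0, hv, hψ, -⟩ := hHW
  obtain ⟨I₁, hI₁, hD₁⟩ := S.exists_isCofiniteIdeal_lie_D_eq_zero hfd hψ (n := -1) (by decide)
  obtain ⟨I₂, hI₂, hD₂⟩ := S.exists_isCofiniteIdeal_lie_D_eq_zero hfd hψ (n := -2) (by decide)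
  obtain ⟨J, hJ, hE⟩ := S.exists_isCofiniteIdeal_forall_lie_E_eq_zero hfd hψ (n := -1) (by decide)
  refine ⟨I₁ ⊓ I₂ ⊓ J, (hI₁.inf hI₂).inf hJ, S.vanishesOn_of_lie_eq_zero hψ hv0 ?_⟩
  rintro a ⟨⟨ha₁, ha₂⟩, haJ⟩ z hz
  exact S.lie_eq_zero_of_mem_cartanTensors hv (hD₁ a ha₁) (hD₂ a ha₂) (hE a haJ) hz

end Killing

end HighestWeightModule

end LoopAffVir

theorem statement1_general
    {g A L : Type*} [LieRing g] [LieAlgebra ℂ g] [FiniteDimensional ℂ g]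
    [LieAlgebra.IsKilling ℂ g] [Nontrivial g]
    [CommRing A] [Algebra ℂ A]
    [LieRing L] [LieAlgebra ℂ L]
    (S : LoopAffVir g A L)
    (V : Type*) [AddCommGroup V] [Module ℂ V] [LieRingModule L V] [LieModule ℂ L V]
    (ψ : Module.Dual ℂ S.cartanA) (hHW : S.IsHWModule V ψ)
    [IsSimpleOrder (LieSubmodule ℂ L V)] :
    (S.HasFinDimWeightSpaces V ↔ ∃ I : Ideal A, IsCofiniteIdeal I ∧ S.VanishesOn ψ I) ∧
      ∀ I : Ideal A, S.VanishesOn ψ I → S.Annihilates V I :=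
  ⟨⟨S.exists_isCofiniteIdeal_vanishesOn hHW,
    fun ⟨_, hcof, hI⟩ => S.hasFinDimWeightSpaces_of_vanishesOn hHW hcof hI⟩,
    fun _ hI => S.annihilates_of_vanishesOn hHW hI⟩

/-- The irreducible highest weight module `V(ψ)` has finite dimensional
weight spaces with respect to `h̄` iff `ψ` factors through `h̄ ⊗ I` for a cofinite ideal `I`
of `A`; and in that case `(𝔏 ⊗ I) ⬝ V(ψ) = 0`. -/
theorem statement1
    {g A L : Type*} [LieRing g] [LieAlgebra ℂ g] [FiniteDimensional ℂ g]
    [LieAlgebra.IsSimple ℂ g]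
    [CommRing A] [Algebra ℂ A] [Algebra.FiniteType ℂ A]
    [LieRing L] [LieAlgebra ℂ L]
    (S : LoopAffVir g A L)
    (V : Type*) [AddCommGroup V] [Module ℂ V] [LieRingModule L V] [LieModule ℂ L V]
    (ψ : Module.Dual ℂ S.cartanA)
    (hWM : S.IsWeightModule V)
    (hHW : S.IsHWModule V ψ)
    (hIrr : IsSimpleOrder (LieSubmodule ℂ L V))
    :
    (S.HasFinDimWeightSpaces V ↔
      ∃ I : Ideal A, IsCofiniteIdeal I ∧
        ∀ (h : S.H) (a : A), a ∈ I →
          ψ (S.eHA h a) = 0 ∧ ψ (S.KA a) = 0 ∧ ψ (S.DA0 a) = 0 ∧ ψ (S.CA a) = 0) ∧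
    (S.HasFinDimWeightSpaces V →
      ∀ I : Ideal A, IsCofiniteIdeal I →
        (∀ (h : S.H) (a : A), a ∈ I →
          ψ (S.eHA h a) = 0 ∧ ψ (S.KA a) = 0 ∧ ψ (S.DA0 a) = 0 ∧ ψ (S.CA a) = 0) →
        S.Annihilates V I) := by
  have := LieAlgebra.IsSimple.nontrivial (R := ℂ) (L := g)
  obtain ⟨hiff, hann⟩ := statement1_general S V ψ hHW
  exact ⟨hiff, fun _ I _ => hann I⟩
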